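/- arXiv:1609.05890 — 2 statements merged into one kernel-verified Lean document; each statement's English description precedes it below -/
import Mathlib

section
/- Let A ∈ C_2 with rank A = 2. Then the dimension of the face F(A) of C_2 generated by A is either 0 or 2. -/
open Matrix
open scoped ComplexOrder

noncomputable section

/-- `Cset n` is the set of n²×n² complex positive semidefinite matrices, written in block
form with blocks indexed by pairs `(i,k)` (block row `i`, inner row `k`), whose `(i,j)`
blocks have trace `δ_{ij}`.  It corresponds to the set of quantum channels via the Choi
matrix. -/
def Cset (n : ℕ) : Set (Matrix (Fin n × Fin n) (Fin n × Fin n) ℂ) :=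
  {A | A.PosSemidef ∧
    ∀ i j : Fin n, ∑ k : Fin n, A (i, k) (j, k) = if i = j then 1 else 0}

/-- `F` is a face of the convex set `C`: a convex subset such that whenever a point of `F`
lies in the open segment between two points of `C`, both endpoints lie in `F`. -/
def IsFace {V : Type*} [AddCommGroup V] [Module ℝ V] (C F : Set V) : Prop :=
  F ⊆ C ∧ Convex ℝ F ∧
    ∀ x ∈ C, ∀ y ∈ C, ∀ t : ℝ, 0 < t → t < 1 → t • x + (1 - t) • y ∈ F → x ∈ F ∧ y ∈ F

/-- The face of `C` generated by `A`: the smallest face of `C` containing `A`. -/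
def faceGen {V : Type*} [AddCommGroup V] [Module ℝ V] (C : Set V) (A : V) : Set V :=
  ⋂₀ {F : Set V | IsFace C F ∧ A ∈ F}

/-- The dimension of a face: the dimension of its affine hull as a real affine subspace. -/
def faceDim {V : Type*} [AddCommGroup V] [Module ℝ V] (F : Set V) : ℕ :=
  Module.finrank ℝ ↥(vectorSpan ℝ F)


abbrev M4 := Matrix (Fin 2 × Fin 2) (Fin 2 × Fin 2) ℂ
abbrev M42 := Matrix (Fin 2 × Fin 2) (Fin 2) ℂ
abbrev M2 := Matrix (Fin 2) (Fin 2) ℂ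

/-- partial trace -/
def pTr : M4 →ₗ[ℝ] M2 where
  toFun B := Matrix.of fun i j => ∑ k : Fin 2, B (i, k) (j, k)
  map_add' X Y := by ext i j; simp [Finset.sum_add_distrib]
  map_smul' c X := by ext i j; simp

lemma mem_Cset2 (A : M4) : A ∈ Cset 2 ↔ A.PosSemidef ∧ pTr A = 1 := by
  unfold Cset pTr
  simp only [Set.mem_ofPred_eq, LinearMap.coe_mk, AddHom.coe_mk, ← Matrix.ext_iff, Matrix.of_apply,
    Matrix.one_apply]

/-- directions of the face -/
def Kdir (V : M42) : Submodule ℝ M4 where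
  carrier := {B | (∃ H : M2, H.IsHermitian ∧ B = V * H * Vᴴ) ∧ pTr B = 0}
  zero_mem' := ⟨⟨0, by simp, by simp⟩, by simp⟩
  add_mem' := by
    rintro _ _ ⟨⟨H, hH, rfl⟩, h1⟩ ⟨⟨H', hH', rfl⟩, h2⟩
    exact ⟨⟨H + H', hH.add hH', by rw [Matrix.mul_add, Matrix.add_mul]⟩, by rw [map_add, h1, h2, add_zero]⟩
  smul_mem' := by
    rintro c _ ⟨⟨H, hH, rfl⟩, h1⟩
    refine ⟨⟨c • H, ?_, by simp⟩, by rw [map_smul, h1, smul_zero]⟩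
    unfold Matrix.IsHermitian at *
    rw [Matrix.conjTranspose_smul, hH]; simp

lemma factor_exists (A : M4) (hA : A.PosSemidef) (hr : A.rank = 2) :
    ∃ (V : M42) (W : Matrix (Fin 2) (Fin 2 × Fin 2) ℂ), V * Vᴴ = A ∧ W * V = 1 := by
  have hh := hA.isHermitian
  have hc := hh.rank_eq_card_non_zero_eigs
  rw [hr] at hc
  let e : Fin 2 ≃ {i // hh.eigenvalues i ≠ 0} := Fintype.equivOfCardEq (by simp [← hc])
  let U : M4 := hh.eigenvectorUnitary
  have hUU : Uᴴ * U = 1 := by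
    have := Unitary.coe_star_mul_self hh.eigenvectorUnitary
    simpa [U, Matrix.star_eq_conjTranspose] using this
  let s : Fin 2 → ℝ := fun l => Real.sqrt (hh.eigenvalues (e l))
  have hs : ∀ l, s l ≠ 0 := fun l =>
    (Real.sqrt_pos.2 (lt_of_le_of_ne (hA.eigenvalues_nonneg _) (e l).2.symm)).ne'
  have hs2 : ∀ l, s l * s l = hh.eigenvalues (e l) := fun l =>
    Real.mul_self_sqrt (hA.eigenvalues_nonneg _)
  refine ⟨Matrix.of fun x l => U x (e l) * (s l : ℂ),
    Matrix.of fun l x => ((s l : ℂ))⁻¹ * star (U x (e l)), ?_, ?_⟩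
  · conv_rhs => rw [hh.spectral_theorem, Unitary.conjStarAlgAut_apply]
    ext x y
    have : (∑ i, U x i * (hh.eigenvalues i : ℂ) * star (U y i))
      = ∑ l : Fin 2, U x (e l) * (s l : ℂ) * star (U y (e l) * (s l : ℂ)) := by
      have h1 : ∀ l : Fin 2, U x (e l) * (s l : ℂ) * star (U y (e l) * (s l : ℂ))
          = (fun i : {i // hh.eigenvalues i ≠ 0} =>
            U x i * (hh.eigenvalues i : ℂ) * star (U y i)) (e l) := by
        intro l
        simp only [← hs2]
        simp
        ring
      simp only [h1]
      rw [e.sum_comp (fun i : {i // hh.eigenvalues i ≠ 0} =>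
            U x i * (hh.eigenvalues i : ℂ) * star (U y i)),
        ← Finset.sum_subtype (Finset.univ.filter (fun i => hh.eigenvalues i ≠ 0)) (by simp)
          (fun i => U x i * (hh.eigenvalues i : ℂ) * star (U y i)),
        Finset.sum_filter_of_ne]
      intro i _ hi h0
      exact hi (by simp [h0])
    rw [Matrix.mul_apply, Matrix.mul_apply]
    simp only [Matrix.mul_diagonal, Matrix.of_apply, Matrix.conjTranspose_apply,
      Matrix.star_apply]
    exact this.symm
  · ext l m
    have := congrFun (congrFun hUU (e l)) (e m)
    rw [Matrix.mul_apply] at this ⊢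
    simp only [Matrix.of_apply, Matrix.conjTranspose_apply] at this ⊢
    have h2 : ∀ x, (s l : ℂ)⁻¹ * star (U x (e l)) * (U x (e m) * (s m : ℂ))
       = ((s l : ℂ)⁻¹ * (s m : ℂ)) * (star (U x (e l)) * U x (e m)) := fun x => by ring
    simp only [h2]
    rw [← Finset.mul_sum, this, Matrix.one_apply, Matrix.one_apply]
    by_cases h : l = m
    · subst h; simp [hs]
    · have : (e l : Fin 2 × Fin 2) ≠ e m := fun h' => h (e.injective (Subtype.ext h'))
      simp [h, this]

section
open scoped Matrix.Norms.L2Operator MatrixOrder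
lemma herm_bound (H : M2) (hH : H.IsHermitian) :
    ∃ c : ℝ, 0 < c ∧ (1 + c • H).PosSemidef ∧ (1 - c • H).PosSemidef := by
  have hs : IsSelfAdjoint H := hH
  have h1 := hs.le_algebraMap_norm_self
  have h2 := hs.neg_algebraMap_norm_le_self
  rw [Matrix.le_iff, Algebra.algebraMap_eq_smul_one] at h1 h2
  have hp : (0:ℝ) < 1 + ‖H‖ := by positivity
  have hp' : (0:ℝ) ≤ (1 + ‖H‖)⁻¹ := by positivity
  have one : (1 : M2).PosSemidef := Matrix.PosSemidef.one
  refine ⟨(1 + ‖H‖)⁻¹, by positivity, ?_, ?_⟩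
  · have := (h2.add one).smul hp'
    have e : (1 : M2) + (1 + ‖H‖)⁻¹ • H = (1 + ‖H‖)⁻¹ • (H - -(‖H‖ • (1 : M2)) + 1) := by
      rw [← inv_smul_smul₀ hp.ne' (1 : M2), ← smul_add]
      congr 1
      rw [inv_smul_smul₀ hp.ne']
      module
    rw [e]; exact this
  · have := (h1.add one).smul hp'
    have e : (1 : M2) - (1 + ‖H‖)⁻¹ • H = (1 + ‖H‖)⁻¹ • (‖H‖ • (1 : M2) - H + 1) := by
      rw [← inv_smul_smul₀ hp.ne' (1 : M2), ← smul_sub]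
      congr 1
      rw [inv_smul_smul₀ hp.ne']
      module
    rw [e]; exact this
end

lemma ker_face (A : M4) :
    IsFace (Cset 2) {X | X ∈ Cset 2 ∧ ∀ v, A *ᵥ v = 0 → X *ᵥ v = 0} := by
  refine ⟨fun X h => h.1, ?_, ?_⟩
  · rintro X ⟨hX, hX'⟩ Y ⟨hY, hY'⟩ a b ha hb hab
    rw [mem_Cset2] at hX hY
    refine ⟨(mem_Cset2 _).2 ⟨(hX.1.smul ha).add (hY.1.smul hb), ?_⟩, fun v hv => ?_⟩
    · rw [map_add, map_smul, map_smul, hX.2, hY.2, ← add_smul, hab, one_smul]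
    · rw [Matrix.add_mulVec, Matrix.smul_mulVec, Matrix.smul_mulVec, hX' v hv, hY' v hv]; simp
  · rintro X hX Y hY t ht0 ht1 ⟨-, hZ⟩
    have hX1 := ((mem_Cset2 _).1 hX).1
    have hY1 := ((mem_Cset2 _).1 hY).1
    have key : ∀ v, A *ᵥ v = 0 → X *ᵥ v = 0 ∧ Y *ᵥ v = 0 := by
      intro v hv
      have h := hZ v hv
      have hx := hX1.dotProduct_mulVec_nonneg v
      have hy := hY1.dotProduct_mulVec_nonneg v
      have h0 : t • (star v ⬝ᵥ X *ᵥ v) + (1 - t) • (star v ⬝ᵥ Y *ᵥ v) = 0 := by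
        rw [Matrix.add_mulVec, Matrix.smul_mulVec, Matrix.smul_mulVec] at h
        rw [← dotProduct_smul, ← dotProduct_smul, ← dotProduct_add, h, dotProduct_zero]
      have h1 := (add_eq_zero_iff_of_nonneg (smul_nonneg ht0.le hx)
        (smul_nonneg (sub_nonneg.2 ht1.le) hy)).1 h0
      have e1 := (smul_eq_zero_iff_right ht0.ne').1 h1.1
      have e2 := (smul_eq_zero_iff_right (sub_pos.2 ht1).ne').1 h1.2
      exact ⟨(hX1.dotProduct_mulVec_zero_iff v).1 e1, (hY1.dotProduct_mulVec_zero_iff v).1 e2⟩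
    exact ⟨⟨hX, fun v hv => (key v hv).1⟩, ⟨hY, fun v hv => (key v hv).2⟩⟩

lemma span_face (A : M4) (hA : A ∈ Cset 2) (V : M42) (W : Matrix (Fin 2) (Fin 2 × Fin 2) ℂ)
    (hV : V * Vᴴ = A) (hW : W * V = 1) : vectorSpan ℝ (faceGen (Cset 2) A) = Kdir V := by
  have hW' : Vᴴ * Wᴴ = 1 := by rw [← Matrix.conjTranspose_mul, hW, Matrix.conjTranspose_one]
  have hA' := (mem_Cset2 _).1 hA
  apply le_antisymm
  · rw [vectorSpan, Submodule.span_le]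
    have hG : ∀ X ∈ faceGen (Cset 2) A, pTr X = 1 ∧ ∃ H : M2, H.IsHermitian ∧ X = V * H * Vᴴ := by
      intro X hX
      have := hX _ ⟨ker_face A, hA, fun v hv => hv⟩
      obtain ⟨hX1, hX2⟩ := this
      rw [mem_Cset2] at hX1
      have hXh := hX1.1.isHermitian
      refine ⟨hX1.2, W * X * Wᴴ, Matrix.isHermitian_mul_mul_conjTranspose W hXh, ?_⟩
      have h1 : X * (1 - Wᴴ * Vᴴ) = 0 := by
        have hz : A * (1 - Wᴴ * Vᴴ) = 0 := by
          rw [← hV, mul_sub, Matrix.mul_assoc V Vᴴ (Wᴴ * Vᴴ), ← Matrix.mul_assoc Vᴴ, hW']; simp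
        ext i j
        have h3 : A *ᵥ (fun k => (1 - Wᴴ * Vᴴ : M4) k j) = 0 := by
          ext i; exact congrFun (congrFun hz i) j
        exact congrFun (hX2 _ h3) i
      have h2 : X = X * (Wᴴ * Vᴴ) := by
        rw [mul_sub, mul_one, sub_eq_zero] at h1; exact h1
      have h3 : X = V * W * X := by
        have := congrArg Matrix.conjTranspose h2
        rw [Matrix.conjTranspose_mul, Matrix.conjTranspose_mul, hXh.eq] at this
        simpa using this
      calc X = V * W * X := h3
        _ = V * W * (X * (Wᴴ * Vᴴ)) := by rw [← h2]
        _ = _ := by simp only [Matrix.mul_assoc]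
    rintro _ ⟨X, hX, Y, hY, rfl⟩
    obtain ⟨hX1, H, hH, hX2⟩ := hG X hX
    obtain ⟨hY1, H', hH', hY2⟩ := hG Y hY
    refine ⟨⟨H - H', hH.sub hH', ?_⟩, ?_⟩
    · simp only [vsub_eq_sub]; rw [hX2, hY2, Matrix.mul_sub, Matrix.sub_mul]
    · simp only [vsub_eq_sub]; rw [map_sub, hX1, hY1, sub_self]
  · rintro B ⟨⟨H, hH, rfl⟩, hB⟩
    obtain ⟨c, hc, h1, h2⟩ := herm_bound H hH
    have hp : A + c • (V * H * Vᴴ) ∈ Cset 2 := by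
      rw [mem_Cset2]
      refine ⟨?_, by rw [map_add, map_smul, hB, hA'.2]; simp⟩
      have := h1.mul_mul_conjTranspose_same V
      rw [← hV]; convert this using 1; simp [Matrix.mul_add, Matrix.add_mul]
    have hm : A - c • (V * H * Vᴴ) ∈ Cset 2 := by
      rw [mem_Cset2]
      refine ⟨?_, by rw [map_sub, map_smul, hB, hA'.2]; simp⟩
      have := h2.mul_mul_conjTranspose_same V
      rw [← hV]; convert this using 1; simp [Matrix.mul_sub, Matrix.sub_mul]
    have hAF : A ∈ faceGen (Cset 2) A := fun F hF => hF.2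
    have hpF : A + c • (V * H * Vᴴ) ∈ faceGen (Cset 2) A := by
      intro F hF
      refine (hF.1.2.2 _ hp _ hm (1/2) (by norm_num) (by norm_num) ?_).1
      convert hF.2 using 1
      module
    have := vsub_mem_vectorSpan ℝ hpF hAF
    rw [vsub_eq_sub, add_sub_cancel_left] at this
    exact (Submodule.smul_mem_iff _ hc.ne').1 this

/-- slices -/
def slc (V : M42) (l : Fin 2) : M2 := Matrix.of fun i k => V (i, k) l

lemma pTr_eq (V : M42) (H : M2) : pTr (V * H * Vᴴ) =
    H 0 0 • (slc V 0 * (slc V 0)ᴴ) + H 0 1 • (slc V 0 * (slc V 1)ᴴ)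
    + H 1 0 • (slc V 1 * (slc V 0)ᴴ) + H 1 1 • (slc V 1 * (slc V 1)ᴴ) := by
  ext i j
  simp [pTr, slc, Matrix.mul_apply, Fin.sum_univ_two]
  ring

lemma core (P Q : M2) (p q : ℝ) (hp : 0 < p) (hq : 0 < q) (hP : P * Pᴴ = (p : ℂ) • (1 : M2))
    (hQ : Q * Qᴴ = (q : ℂ) • (1 : M2)) (hind : ∀ c : ℂ, Q ≠ c • P) :
    ∃ (w : ℂ) (s : ℝ), w ≠ 0 ∧ w • (P * Qᴴ) + star w • (Q * Pᴴ) = (s : ℂ) • (1 : M2) ∧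
      ∀ (z : ℂ) (r : ℂ), r • (1 : M2) + z • (P * Qᴴ) + star z • (Q * Pᴴ) = 0 →
        ∃ t : ℝ, z = t * w := by
  have hpc : (p : ℂ) ≠ 0 := by exact_mod_cast hp.ne'
  have hqc : (q : ℂ) ≠ 0 := by exact_mod_cast hq.ne'
  have comm : ∀ (X : M2) (c : ℂ), c ≠ 0 → X * Xᴴ = c • (1 : M2) → Xᴴ * X = c • (1 : M2) := by
    intro X c hc h
    have h1 : X * (c⁻¹ • Xᴴ) = 1 := by rw [Matrix.mul_smul, h, smul_smul, inv_mul_cancel₀ hc, one_smul]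
    have h2 := mul_eq_one_comm.1 h1
    rw [Matrix.smul_mul] at h2
    rw [← h2, smul_smul, mul_inv_cancel₀ hc, one_smul]
  have hP' := comm P p hpc hP
  have hQ' := comm Q q hqc hQ
  have hMH : Q * Pᴴ = (P * Qᴴ)ᴴ := by rw [Matrix.conjTranspose_mul]; simp
  rw [hMH]
  have hns : ∀ m : ℂ, P * Qᴴ ≠ m • (1 : M2) := by
    intro m hm
    have h1 : (p : ℂ) • Qᴴ = m • Pᴴ := by
      calc (p : ℂ) • Qᴴ = Pᴴ * P * Qᴴ := by rw [hP']; simp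
        _ = _ := by rw [Matrix.mul_assoc, hm]; simp
    have h2 := congrArg Matrix.conjTranspose h1
    rw [Matrix.conjTranspose_smul, Matrix.conjTranspose_smul] at h2
    simp only [Matrix.conjTranspose_conjTranspose] at h2
    apply hind ((p : ℂ)⁻¹ * star m)
    rw [← smul_smul, ← h2, smul_smul]
    simp [hpc]
  have hMM : (P * Qᴴ) * (P * Qᴴ)ᴴ = ((p * q : ℝ) : ℂ) • (1 : M2) := by
    rw [Matrix.conjTranspose_mul, Matrix.conjTranspose_conjTranspose]
    calc P * Qᴴ * (Q * Pᴴ) = P * (Qᴴ * Q) * Pᴴ := by simp only [Matrix.mul_assoc]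
      _ = _ := by rw [hQ', Matrix.mul_smul, Matrix.mul_one, Matrix.smul_mul, hP, smul_smul]; push_cast; rw [mul_comm]
  generalize P * Qᴴ = M at *
  have hr : 0 < p * q := by positivity
  generalize p * q = r at *
  clear hP hQ hP' hQ' hMH comm hind hpc hqc hp hq
  have hrc : (r : ℂ) ≠ 0 := by exact_mod_cast hr.ne'
  have hadj : M.det • Mᴴ = (r : ℂ) • M.adjugate := by
    have : M.adjugate * (M * Mᴴ) = M.adjugate * ((r : ℂ) • (1 : M2)) := by rw [hMM]
    rw [← Matrix.mul_assoc, Matrix.adjugate_mul] at this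
    simpa using this
  have hdet : M.det * star M.det = (r : ℂ) ^ 2 := by
    have := congrArg Matrix.det hMM
    rw [Matrix.det_mul, Matrix.det_conjTranspose] at this
    simpa using this
  have hd0 : M.det ≠ 0 := by
    intro h; rw [h, zero_mul] at hdet; exact pow_ne_zero 2 hrc hdet.symm
  generalize M.det = δ at *
  rw [Matrix.adjugate_fin_two] at hadj
  have a00 := congrFun (congrFun hadj 0) 0
  have a01 := congrFun (congrFun hadj 0) 1
  have a10 := congrFun (congrFun hadj 1) 0
  have a11 := congrFun (congrFun hadj 1) 1
  simp at a00 a01 a10 a11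
  obtain ⟨w, hw⟩ := IsAlgClosed.exists_pow_nat_eq ((r : ℂ) * star δ) (n := 2) (by norm_num)
  have hw0 : w ≠ 0 := by
    rintro rfl
    simp [hrc, hd0] at hw
  have hww : w * star w = (r : ℂ) ^ 2 := by
    have h1 : (w * star w) ^ 2 = ((r : ℂ) ^ 2) ^ 2 := by
      have hw' : star w ^ 2 = (r : ℂ) * δ := by
        rw [← star_pow, hw]; simp
      rw [mul_pow, hw, hw']
      linear_combination (r : ℂ) ^ 2 * hdet
    have h2 : w * star w = ((Complex.normSq w : ℝ) : ℂ) := Complex.mul_conj w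
    rw [h2] at h1 ⊢
    have h3 : (Complex.normSq w) ^ 2 = (r ^ 2) ^ 2 := by exact_mod_cast h1
    have := (pow_left_inj₀ (Complex.normSq_nonneg w) (by positivity) (by norm_num)).1 h3
    exact_mod_cast this
  have hdw : δ * w = r * star w := by
    apply mul_left_cancel₀ hw0
    linear_combination δ * hw + r * hdet - r * hww
  have b01 : w * M 0 1 + star w * star (M 1 0) = 0 := by
    apply mul_left_cancel₀ hd0
    simp only [Complex.star_def] at *
    linear_combination M 0 1 * hdw + starRingEnd ℂ w * a01
  have b10 : w * M 1 0 + star w * star (M 0 1) = 0 := by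
    apply mul_left_cancel₀ hd0
    simp only [Complex.star_def] at *
    linear_combination M 1 0 * hdw + starRingEnd ℂ w * a10
  have b00 : w * M 0 0 + star w * star (M 0 0) = w * M 1 1 + star w * star (M 1 1) := by
    apply mul_left_cancel₀ hd0
    simp only [Complex.star_def] at *
    linear_combination (M 0 0 - M 1 1) * hdw + starRingEnd ℂ w * (a00 - a11)
  have hs : w * M 0 0 + star w * star (M 0 0) = ((2 * (w * M 0 0).re : ℝ) : ℂ) := by
    rw [← star_mul', ← Complex.add_conj]; rfl
  refine ⟨w, 2 * (w * M 0 0).re, hw0, ?_, ?_⟩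
  · ext i j
    fin_cases i <;> fin_cases j
    · simpa using hs
    · simpa using b01
    · simpa using b10
    · simpa using b00.symm.trans hs
  · intro z ρ hz
    have c00 := congrFun (congrFun hz 0) 0
    have c01 := congrFun (congrFun hz 0) 1
    have c10 := congrFun (congrFun hz 1) 0
    have c11 := congrFun (congrFun hz 1) 1
    simp at c00 c01 c10 c11 b01 b10 b00
    have hreal : starRingEnd ℂ w * z - starRingEnd ℂ z * w = 0 := by
      by_contra hne
      apply hns (M 0 0)
      have d01 : M 0 1 = 0 := by
        apply mul_left_cancel₀ hne
        linear_combination starRingEnd ℂ w * c01 - starRingEnd ℂ z * b01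
      have d10 : M 1 0 = 0 := by
        apply mul_left_cancel₀ hne
        linear_combination starRingEnd ℂ w * c10 - starRingEnd ℂ z * b10
      have d11 : M 1 1 = M 0 0 := by
        apply mul_left_cancel₀ hne
        linear_combination starRingEnd ℂ w * (c11 - c00) + starRingEnd ℂ z * b00
      ext i j
      fin_cases i <;> fin_cases j <;> simp [d01, d10, d11]
    have hre : starRingEnd ℂ (starRingEnd ℂ w * z) = starRingEnd ℂ w * z := by
      simp; linear_combination -hreal
    obtain ⟨x, hx⟩ := Complex.conj_eq_iff_real.1 hre
    refine ⟨x / r ^ 2, ?_⟩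
    push_cast
    rw [← hx]
    field_simp
    simp at hww
    linear_combination -z * hww

lemma finrank_Kdir (V : M42) (W : Matrix (Fin 2) (Fin 2 × Fin 2) ℂ) (hW : W * V = 1)
    (hV : pTr (V * Vᴴ) = 1) (d : Fin 2 → ℝ) (hd : d ≠ 0)
    (hD : pTr (V * Matrix.diagonal (fun i => (d i : ℂ)) * Vᴴ) = 0) :
    Module.finrank ℝ (Kdir V) = 2 := by
  have e1 : slc V 0 * (slc V 0)ᴴ + slc V 1 * (slc V 1)ᴴ = 1 := by
    have := pTr_eq V 1
    rw [Matrix.mul_one, hV] at this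
    rw [this]; simp
  rw [pTr_eq] at hD
  simp at hD
  have hind : ∀ c : ℂ, slc V 1 ≠ c • slc V 0 := by
    intro c hc
    have h1 : ∀ x, V x 1 = c * V x 0 := fun x => congrFun (congrFun hc x.1) x.2
    have h2 := congrFun (congrFun hW 1) 1
    have h3 := congrFun (congrFun hW 1) 0
    rw [Matrix.mul_apply] at h2 h3
    simp only [h1, mul_left_comm _ c] at h2
    rw [← Finset.mul_sum, h3] at h2
    simp at h2
  have hP0 : slc V 0 ≠ 0 := by
    intro hc
    have h1 : ∀ x, V x 0 = 0 := fun x => congrFun (congrFun hc x.1) x.2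
    have h2 := congrFun (congrFun hW 0) 0
    rw [Matrix.mul_apply] at h2
    simp [h1] at h2
  have hQ0 : slc V 1 ≠ 0 := fun h => hind 0 (by simpa using h)
  have hpt := pTr_eq V
  generalize slc V 0 = P at *
  generalize slc V 1 = Q at *
  have hdd : d 1 - d 0 ≠ 0 := by
    intro h
    have h' : d 1 = d 0 := sub_eq_zero.1 h
    rw [h', ← smul_add, e1] at hD
    have := congrFun (congrFun hD 0) 0
    simp at this
    apply hd; ext i; fin_cases i <;> simp [this, h']
  have hddc : (d 1 : ℂ) - d 0 ≠ 0 := by exact_mod_cast hdd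
  have pos : ∀ (X : M2) (x : ℝ), X ≠ 0 → X * Xᴴ = (x : ℂ) • (1 : M2) → 0 < x := by
    intro X x hX h
    have h1 := (Matrix.posSemidef_self_mul_conjTranspose X).diag_nonneg (i := 0)
    rw [h] at h1
    simp at h1
    refine lt_of_le_of_ne h1 ?_
    rintro rfl
    apply hX
    rw [← Matrix.self_mul_conjTranspose_eq_zero, h]; simp
  have hP : P * Pᴴ = ((d 1 / (d 1 - d 0) : ℝ) : ℂ) • (1 : M2) := by
    ext i j
    have h1 := congrFun (congrFun e1 i) j
    have h2 := congrFun (congrFun hD i) j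
    simp only [Matrix.add_apply, Matrix.smul_apply, Matrix.zero_apply, Complex.real_smul,
      smul_eq_mul] at h1 h2 ⊢
    push_cast
    field_simp
    linear_combination (d 1 : ℂ) * h1 - h2
  have hQ : Q * Qᴴ = ((1 - d 1 / (d 1 - d 0) : ℝ) : ℂ) • (1 : M2) := by
    rw [← sub_eq_iff_eq_add'.2 e1.symm, hP]
    push_cast
    rw [sub_smul, one_smul]
  generalize d 1 / (d 1 - d 0) = p at *
  generalize 1 - p = q at *
  have hp := pos P p hP0 hP
  have hq := pos Q q hQ0 hQ
  have hpc : (p : ℂ) ≠ 0 := by exact_mod_cast hp.ne'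
  obtain ⟨w, s, hw, hws, huniq⟩ := core P Q p q hp hq hP hQ hind
  let N0 : M2 := !![(q : ℂ), 0; 0, -(p : ℂ)]
  let N1 : M2 := !![(-s / p : ℂ), w; star w, 0]
  have hN0 : N0.IsHermitian := by
    ext i j; fin_cases i <;> fin_cases j <;> simp [N0]
  have hN1 : N1.IsHermitian := by
    ext i j; fin_cases i <;> fin_cases j <;> simp [N1]
  have inj : ∀ H : M2, V * H * Vᴴ = 0 → H = 0 := by
    intro H h
    have hW' : Vᴴ * Wᴴ = 1 := by rw [← Matrix.conjTranspose_mul, hW, Matrix.conjTranspose_one]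
    calc H = (W * V) * H * (Vᴴ * Wᴴ) := by rw [hW, hW']; simp
      _ = W * (V * H * Vᴴ) * Wᴴ := by simp only [Matrix.mul_assoc]
      _ = 0 := by rw [h]; simp
  have hli : LinearIndependent ℝ ![V * N0 * Vᴴ, V * N1 * Vᴴ] := by
    rw [LinearIndependent.pair_iff]
    intro a b hab
    have h := inj (a • N0 + b • N1) (by rw [← hab]; simp [Matrix.mul_add, Matrix.add_mul])
    have h01 := congrFun (congrFun h 0) 1
    have h11 := congrFun (congrFun h 1) 1
    simp [N0, N1, hw, hpc] at h01 h11
    exact ⟨h11, h01⟩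
  have hspan : Kdir V = Submodule.span ℝ (Set.range ![V * N0 * Vᴴ, V * N1 * Vᴴ]) := by
    apply le_antisymm
    · rintro _ ⟨⟨H, hH, rfl⟩, h0⟩
      rw [hpt, hP, hQ] at h0
      have x00 := hH.coe_re_apply_self 0
      have x11 := hH.coe_re_apply_self 1
      have x10 := hH.apply 1 0
      have h0' : (H 0 0 * p + H 1 1 * q) • (1 : M2) + H 0 1 • (P * Qᴴ) + star (H 0 1) • (Q * Pᴴ) = 0 := by
        rw [← h0, x10]; module
      obtain ⟨t, ht⟩ := huniq _ _ h0'
      rw [ht, add_assoc, star_mul', ← smul_smul] at h0'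
      have : star (t : ℂ) = t := Complex.conj_ofReal t
      rw [this, ← smul_smul, ← smul_add, hws] at h0'
      have h00 := congrFun (congrFun h0' 0) 0
      simp at h00
      have : V * H * Vᴴ = (-(H 1 1).re / p) • (V * N0 * Vᴴ) + t • (V * N1 * Vᴴ) := by
        have : H = (-(H 1 1).re / p) • N0 + t • N1 := by
          have x11' : (((H 1 1).re : ℝ) : ℂ) = H 1 1 := x11
          ext i j
          fin_cases i <;> fin_cases j
          · simp [N0, N1, x11']
            field_simp
            linear_combination h00
          · simp [N0, N1, ht]
          · simp [N0, N1, ← x10, ht]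
          · simp [N0, N1, x11']
            field_simp
        conv_lhs => rw [this]
        simp [Matrix.mul_add, Matrix.add_mul]
      rw [this]
      exact add_mem (Submodule.smul_mem _ _ (Submodule.subset_span ⟨0, rfl⟩))
        (Submodule.smul_mem _ _ (Submodule.subset_span ⟨1, rfl⟩))
    · rw [Submodule.span_le]
      rintro _ ⟨i, rfl⟩
      fin_cases i
      · refine ⟨⟨N0, hN0, rfl⟩, ?_⟩
        show pTr (V * N0 * Vᴴ) = 0
        rw [hpt, hP, hQ]
        simp [N0, smul_smul, mul_comm]
      · refine ⟨⟨N1, hN1, rfl⟩, ?_⟩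
        show pTr (V * N1 * Vᴴ) = 0
        rw [hpt, hP, hQ, add_assoc (N1 0 0 • _)]
        have : N1 0 1 • (P * Qᴴ) + N1 1 0 • (Q * Pᴴ) = (s : ℂ) • (1 : M2) := hws
        rw [this]
        have h3 : N1 0 0 = -s / p := rfl
        have h4 : N1 1 1 = 0 := rfl
        rw [h3, h4, smul_smul, div_mul_cancel₀ _ hpc]
        simp
  rw [hspan, finrank_span_eq_card hli]
  simp

/-- If `A ∈ C_2` has rank 2, then the face of `C_2` generated by `A` has dimension 0 or 2. -/
theorem faceDim_rank_two_n_eq_two (A : Matrix (Fin 2 × Fin 2) (Fin 2 × Fin 2) ℂ)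
    (hA : A ∈ Cset 2) (hrank : A.rank = 2) :
    faceDim (faceGen (Cset 2) A) = 0 ∨ faceDim (faceGen (Cset 2) A) = 2 := by
  have hA' := (mem_Cset2 _).1 hA
  obtain ⟨V, W, hV, hW⟩ := factor_exists A hA'.1 hrank
  unfold faceDim
  by_cases hK : Kdir V = ⊥
  · left
    rw [span_face A hA V W hV hW, hK, finrank_bot]
  · right
    obtain ⟨B, ⟨⟨H, hH, hB⟩, hT⟩, hB0⟩ := Submodule.exists_mem_ne_zero_of_ne_bot hK
    let U : M2 := hH.eigenvectorUnitary
    have hU1 : Uᴴ * U = 1 := Unitary.coe_star_mul_self hH.eigenvectorUnitary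
    have hU2 : U * Uᴴ = 1 := Unitary.coe_mul_star_self hH.eigenvectorUnitary
    have hHU : H = U * Matrix.diagonal (fun i => (hH.eigenvalues i : ℂ)) * Uᴴ := by
      conv_lhs => rw [hH.spectral_theorem, Unitary.conjStarAlgAut_apply]
      rfl
    have hV' : (V * U) * (V * U)ᴴ = A := by
      rw [Matrix.conjTranspose_mul, Matrix.mul_assoc, ← Matrix.mul_assoc U, hU2, Matrix.one_mul, hV]
    have hW' : (Uᴴ * W) * (V * U) = 1 := by
      rw [Matrix.mul_assoc, ← Matrix.mul_assoc W, hW, Matrix.one_mul, hU1]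
    rw [span_face A hA (V * U) (Uᴴ * W) hV' hW']
    apply finrank_Kdir (V * U) (Uᴴ * W) hW' (by rw [hV', hA'.2]) hH.eigenvalues
    · intro h
      apply hB0
      rw [hB, (hH.eigenvalues_eq_zero_iff).1 h]; simp
    · rw [← hT, hB]
      congr 1
      conv_rhs => rw [hHU]
      simp only [Matrix.conjTranspose_mul, Matrix.mul_assoc]
end
end

section
/- Let A₃ be the 9×9 complex Hermitian matrix all of whose rows and columns indexed outside {1, 5, 9} are zero, and whose 3×3 principal submatrix on the index set {1, 5, 9} equals P = [[1, 9/(4√6), 3/(2√6)], [9/(4√6), 1, 1/4], [3/(2√6), 1/4, 1]]. Then A₃ ∈ C_3, rank A₃ = 2, and the face F(A₃) of C_3 generated by A₃ has dimension 1; moreover F(A₃) has exactly two extreme points and these two extreme points are entrywise complex conjugates of each other. -/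
open Matrix
open scoped ComplexOrder

noncomputable section

/-- The 3×3 matrix `P` of equation (2.28). -/
def P3 : Matrix (Fin 3) (Fin 3) ℂ :=
  !![1, ((9 / (4 * Real.sqrt 6) : ℝ) : ℂ), ((3 / (2 * Real.sqrt 6) : ℝ) : ℂ);
     ((9 / (4 * Real.sqrt 6) : ℝ) : ℂ), 1, 1 / 4;
     ((3 / (2 * Real.sqrt 6) : ℝ) : ℂ), 1 / 4, 1]

/-- The 9×9 matrix `A₃` of equation (2.29): all rows and columns outside the index set
`{1,5,9}` (i.e. outside the "diagonal" pair indices `(i,i)`) vanish, and the principal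
submatrix on `{1,5,9}` is `P3`. -/
def A3 : Matrix (Fin 3 × Fin 3) (Fin 3 × Fin 3) ℂ :=
  fun p q => if p.1 = p.2 ∧ q.1 = q.2 then P3 p.1 q.1 else 0


theorem aux_ext_left {V : Type*} [AddCommGroup V] [Module ℝ V] (X Y : V) (h : X ≠ Y) :
    X ∈ Set.extremePoints ℝ (segment ℝ X Y) := by
  rw [mem_extremePoints_iff_left]
  refine ⟨left_mem_segment ℝ X Y, ?_⟩
  rintro x1 ⟨a1, b1, ha1, hb1, hab1, rfl⟩ x2 ⟨a2, b2, ha2, hb2, hab2, rfl⟩ ⟨a, b, ha, hb, hab, he⟩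
  have h1 : (a * b1 + b * b2) • (Y - X) = 0 := by
    have : (a * b1 + b * b2) • (Y - X)
        = (a • (a1 • X + b1 • Y) + b • (a2 • X + b2 • Y)) - (a * (a1 + b1) + b * (a2 + b2)) • X := by
      module
    rw [this, he, hab1, hab2]
    simp [hab]
  have h2 : a * b1 + b * b2 = 0 := by
    rcases smul_eq_zero.1 h1 with h2 | h2
    · exact h2
    · exact absurd (sub_eq_zero.1 h2).symm h
  have h3 : b1 = 0 := by
    have := mul_nonneg hb.le hb2
    have h4 : a * b1 = 0 := by
      have := mul_nonneg ha.le hb1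
      linarith
    rcases mul_eq_zero.1 h4 with h5 | h5
    · exact absurd h5 ha.ne'
    · exact h5
  subst h3
  have : a1 = 1 := by linarith
  simp [this]

theorem aux_ext {V : Type*} [AddCommGroup V] [Module ℝ V] (X Y : V) (h : X ≠ Y) :
    Set.extremePoints ℝ (segment ℝ X Y) = {X, Y} := by
  apply Set.Subset.antisymm
  · rw [← convexHull_pair]
    exact extremePoints_convexHull_subset
  · rintro Z (rfl | rfl)
    · exact aux_ext_left _ _ h
    · rw [segment_symm]
      exact aux_ext_left _ _ h.symm

theorem aux_conv (n : ℕ) : Convex ℝ (Cset n) := by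
  intro A hA B hB a b ha hb hab
  refine ⟨(hA.1.smul ha).add (hB.1.smul hb), fun i j => ?_⟩
  simp only [Matrix.add_apply, Matrix.smul_apply, Finset.sum_add_distrib, ← Finset.smul_sum,
    hA.2, hB.2, ← add_smul, hab, one_smul]

/-- embedding of a vector on the diagonal pairs -/
def emb (x : Fin 3 → ℂ) : Fin 3 × Fin 3 → ℂ := fun p => if p.1 = p.2 then x p.1 else 0

def s6 : ℂ := ((Real.sqrt 6 : ℝ) : ℂ)
def cc : ℂ := ((Real.sqrt 10 / 8 : ℝ) : ℂ)

theorem s6_sq : s6 * s6 = 6 := by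
  unfold s6
  rw [← Complex.ofReal_mul, Real.mul_self_sqrt (by norm_num)]; norm_num

theorem cc_sq : cc * cc = 5 / 32 := by
  unfold cc
  rw [← Complex.ofReal_mul, div_mul_div_comm, Real.mul_self_sqrt (by norm_num)]; norm_num

theorem s6_conj : (starRingEnd ℂ) s6 = s6 := Complex.conj_ofReal _
theorem cc_conj : (starRingEnd ℂ) cc = cc := Complex.conj_ofReal _

def uu : Fin 3 → ℂ := ![1, 3 * s6 / 8 - Complex.I * cc, s6 / 4 + 2 * Complex.I * cc]

def XX : Matrix (Fin 3 × Fin 3) (Fin 3 × Fin 3) ℂ := vecMulVec (emb uu) (star (emb uu))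
def YY : Matrix (Fin 3 × Fin 3) (Fin 3 × Fin 3) ℂ := XX.map (starRingEnd ℂ)

/-- general member of the family -/
def QQ (t : ℂ) : Matrix (Fin 3) (Fin 3) ℂ :=
  !![1, 3 * s6 / 8 + Complex.I * t, s6 / 4 - 2 * Complex.I * t;
     3 * s6 / 8 - Complex.I * t, 1, 1 / 4 - Complex.I * t * s6;
     s6 / 4 + 2 * Complex.I * t, 1 / 4 + Complex.I * t * s6, 1]

def lift9 (Q : Matrix (Fin 3) (Fin 3) ℂ) : Matrix (Fin 3 × Fin 3) (Fin 3 × Fin 3) ℂ :=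
  fun p q => if p.1 = p.2 ∧ q.1 = q.2 then Q p.1 q.1 else 0

theorem P3_eq : P3 = QQ 0 := by
  have h0 : (s6 : ℂ) ≠ 0 := by
    intro h; have := s6_sq; rw [h] at this; norm_num at this
  have e1 : ((9 / (4 * Real.sqrt 6) : ℝ) : ℂ) = 3 * s6 / 8 := by
    have : ((9 / (4 * Real.sqrt 6) : ℝ) : ℂ) = 9 / (4 * s6) := by simp [s6]
    rw [this]; field_simp; linear_combination (-12) * s6_sq
  have e2 : ((3 / (2 * Real.sqrt 6) : ℝ) : ℂ) = s6 / 4 := by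
    have : ((3 / (2 * Real.sqrt 6) : ℝ) : ℂ) = 3 / (2 * s6) := by simp [s6]
    rw [this]; field_simp; linear_combination (-2) * s6_sq
  unfold P3 QQ
  rw [e1, e2]
  simp

theorem A3_eq : A3 = lift9 (QQ 0) := by
  rw [← P3_eq]; rfl

theorem lift_vec (x : Fin 3 → ℂ) : vecMulVec (emb x) (star (emb x)) = lift9 (vecMulVec x (star x)) := by
  ext ⟨i, j⟩ ⟨k, l⟩
  by_cases h1 : i = j <;> by_cases h2 : k = l <;> simp [emb, lift9, vecMulVec_apply, h1, h2]

theorem uu_eq : vecMulVec uu (star uu) = QQ cc := by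
  have hI := Complex.I_mul_I
  have h6 := s6_sq
  have hc := cc_sq
  ext i j
  fin_cases i <;> fin_cases j <;>
    simp [uu, QQ, vecMulVec_apply, s6_conj, cc_conj, map_ofNat]
  · ring
  · linear_combination 9 / 64 * h6 - cc ^ 2 * hI + hc
  · linear_combination 3 / 32 * h6 + 2 * cc ^ 2 * hI - 2 * hc
  · linear_combination 3 / 32 * h6 + 2 * cc ^ 2 * hI - 2 * hc
  · linear_combination 1 / 16 * h6 - 4 * cc ^ 2 * hI + 4 * hc

theorem XX_eq : XX = lift9 (QQ cc) := by
  rw [XX, lift_vec, uu_eq]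

theorem YY_eq : YY = lift9 (QQ (-cc)) := by
  rw [YY, XX_eq]
  ext ⟨i, j⟩ ⟨k, l⟩
  by_cases h1 : i = j <;> by_cases h2 : k = l <;> simp [lift9, h1, h2]
  subst h1 h2
  fin_cases i <;> fin_cases k <;> simp [QQ, s6_conj, cc_conj, map_ofNat]
  all_goals ring

theorem YY_eq' : YY = vecMulVec (star (emb uu)) (emb uu) := by
  rw [YY, XX]
  ext p q
  simp [vecMulVec_apply]

theorem lift_tr (t : ℂ) (i j : Fin 3) :
    ∑ k : Fin 3, lift9 (QQ t) (i, k) (j, k) = if i = j then 1 else 0 := by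
  fin_cases i <;> fin_cases j <;> simp [lift9, QQ, Fin.sum_univ_three]

theorem XX_mem : XX ∈ Cset 3 :=
  ⟨posSemidef_vecMulVec_self_star _, by rw [XX_eq]; exact lift_tr _⟩

theorem YY_mem : YY ∈ Cset 3 :=
  ⟨by rw [YY_eq']; exact posSemidef_vecMulVec_star_self _, by rw [YY_eq]; exact lift_tr _⟩

theorem lift_comb (a b : ℝ) (h : a + b = 1) (t r : ℂ) :
    a • lift9 (QQ t) + b • lift9 (QQ r) = lift9 (QQ (a * t + b * r)) := by
  have h' : (a : ℂ) + b = 1 := by exact_mod_cast h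
  obtain rfl : b = 1 - a := by linarith
  ext ⟨i, j⟩ ⟨k, l⟩
  by_cases h1 : i = j <;> by_cases h2 : k = l <;> simp [lift9, h1, h2]
  subst h1 h2
  fin_cases i <;> fin_cases k <;> simp [QQ]
  all_goals ring

theorem A3_mid : (1 / 2 : ℝ) • XX + (1 - 1 / 2 : ℝ) • YY = A3 := by
  rw [XX_eq, YY_eq, A3_eq, lift_comb _ _ (by norm_num)]
  congr 2
  push_cast; ring

theorem XX_ne : XX ≠ YY := by
  rw [XX_eq, YY_eq]
  intro h
  have h1 := congrFun (congrFun h (0, 0)) (1, 1)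
  simp [lift9, QQ] at h1
  have h2 : cc = 0 := by linear_combination (-Complex.I / 2) * h1 + cc * Complex.I_mul_I
  have := cc_sq
  rw [h2] at this; norm_num at this

def ww : Fin 3 × Fin 3 → ℂ := emb ![-s6, 2, 1]

/-- the test vectors spanning the kernel -/
def Kset : Set (Fin 3 × Fin 3 → ℂ) := {v | v = ww ∨ ∃ p : Fin 3 × Fin 3, p.1 ≠ p.2 ∧ v = Pi.single p 1}

theorem lift_ker (t : ℂ) (v : Fin 3 × Fin 3 → ℂ) (hv : v ∈ Kset) : lift9 (QQ t) *ᵥ v = 0 := by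
  rcases hv with rfl | ⟨p, hp, rfl⟩
  · ext ⟨i, j⟩
    simp only [mulVec, dotProduct, Fintype.sum_prod_type, Fin.sum_univ_three, ww, emb, lift9]
    by_cases h : i = j
    · subst h
      fin_cases i <;> simp [QQ]
      · ring
      · linear_combination (-3/8) * s6_sq
      · linear_combination (-1/4) * s6_sq
    · simp [h]
  · ext q
    simp [lift9, hp]

theorem key (B : Matrix (Fin 3 × Fin 3) (Fin 3 × Fin 3) ℂ) (hB : B ∈ Cset 3)
    (hK : ∀ v ∈ Kset, B *ᵥ v = 0) : B ∈ segment ℝ XX YY := by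
  have hz : ∀ q p : Fin 3 × Fin 3, p.1 ≠ p.2 → B q p = 0 := by
    intro q p hp
    have := congrFun (hK _ (Or.inr ⟨p, hp, rfl⟩)) q
    simpa using this
  have hH : ∀ q p, (starRingEnd ℂ) (B q p) = B p q := fun q p => hB.1.1.apply p q
  have hz' : ∀ q p : Fin 3 × Fin 3, p.1 ≠ p.2 → B p q = 0 := by
    intro q p hp
    rw [← hH, hz _ _ hp, map_zero]
  have hd : ∀ i : Fin 3, B (i, i) (i, i) = 1 := by
    intro i
    have h := hB.2 i i
    rw [Finset.sum_eq_single i] at h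
    · simpa using h
    · intro k _ hk
      exact hz _ _ (fun h => hk h.symm)
    · simp
  have hw : ∀ i : Fin 3, -s6 * B (i, i) (0, 0) + 2 * B (i, i) (1, 1) + B (i, i) (2, 2) = 0 := by
    intro i
    have h := congrFun (hK ww (Or.inl rfl)) (i, i)
    simp [mulVec, dotProduct, Fintype.sum_prod_type, Fin.sum_univ_three, ww, emb] at h
    linear_combination h
  have w0 := hw 0
  have w1 := hw 1
  have w2 := hw 2
  rw [hd] at w0 w1 w2
  have hdet := (hB.1.submatrix (![((0 : Fin 3), (0 : Fin 3)), (1, 1)] : Fin 2 → _)).det_nonneg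
  rw [Matrix.det_fin_two] at hdet
  simp [hd] at hdet
  rw [← hH (0, 0) (1, 1)] at hdet w1
  rw [← hH (0, 0) (2, 2)] at w2
  rw [← hH (1, 1) (2, 2)] at w2
  set z := B (0, 0) (1, 1) with hzz
  have e13 : B (0, 0) (2, 2) = s6 - 2 * z := by linear_combination w0
  have e23 : B (1, 1) (2, 2) = s6 * (starRingEnd ℂ) z - 2 := by linear_combination w1
  rw [e13, e23] at w2
  simp [s6_conj, map_ofNat] at w2
  have hre : z + (starRingEnd ℂ) z = 3 * s6 / 4 := by
    linear_combination (s6 / 12) * w2 - ((z + (starRingEnd ℂ) z) / 6 - s6 / 12) * s6_sq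
  have hs6re : s6 = ((Real.sqrt 6 : ℝ) : ℂ) := rfl
  have hre2 : z.re = 3 * Real.sqrt 6 / 8 := by
    have := congrArg Complex.re hre
    simp [hs6re] at this
    linarith
  have him : z.im ^ 2 ≤ 5 / 32 := by
    rw [Complex.mul_conj, Complex.normSq_apply, hre2] at hdet
    have h6 := Real.mul_self_sqrt (show (0:ℝ) ≤ 6 by norm_num)
    have : (3 * Real.sqrt 6 / 8 * (3 * Real.sqrt 6 / 8) + z.im * z.im) ≤ 1 := by exact_mod_cast hdet
    nlinarith
  have hz1 : z = 3 * s6 / 8 + Complex.I * (z.im : ℂ) := by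
    apply Complex.ext <;> simp [hs6re, hre2]
  have hz2 : (starRingEnd ℂ) z = 3 * s6 / 8 - Complex.I * (z.im : ℂ) := by
    linear_combination hre - hz1
  have hBeq : B = lift9 (QQ (z.im : ℂ)) := by
    have f13 : B (0, 0) (2, 2) = s6 / 4 - 2 * Complex.I * (z.im : ℂ) := by
      linear_combination e13 - 2 * hz1
    have f23 : B (1, 1) (2, 2) = 1 / 4 - Complex.I * (z.im : ℂ) * s6 := by
      linear_combination e23 + s6 * hz2 + 3 / 8 * s6_sq
    ext ⟨i, j⟩ ⟨k, l⟩
    by_cases h1 : i = j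
    · by_cases h2 : k = l
      · subst h1 h2
        simp only [lift9, and_self, if_true]
        fin_cases i <;> fin_cases k
        · simp [QQ, hd]
        · simp [QQ]; exact hz1
        · simp [QQ]; exact f13
        · simp [QQ]; rw [← hH (0, 0) (1, 1)]; exact hz2
        · simp [QQ, hd]
        · simp [QQ]; rw [f23]; simp
        · simp [QQ]; rw [← hH (0, 0) (2, 2), f13]; simp [s6_conj, map_ofNat]
        · simp [QQ]; rw [← hH (1, 1) (2, 2), f23]; simp [s6_conj, map_ofNat]
        · simp [QQ, hd]
      · rw [hz _ _ h2]; simp [lift9, h2]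
    · rw [hz' _ _ h1]; simp [lift9, h1]
  set c : ℝ := Real.sqrt 10 / 8 with hc
  have hcpos : 0 < c := by positivity
  have hcsq : c ^ 2 = 5 / 32 := by
    rw [hc, div_pow, Real.sq_sqrt (by norm_num)]; norm_num
  have habs := abs_le_of_sq_le_sq' (him.trans hcsq.symm.le) hcpos.le
  refine ⟨(c + z.im) / (2 * c), (c - z.im) / (2 * c), ?_, ?_, ?_, ?_⟩
  · exact div_nonneg (by linarith [habs.1]) (by positivity)
  · exact div_nonneg (by linarith [habs.2]) (by positivity)
  · field_simp; ring
  · rw [XX_eq, YY_eq, lift_comb _ _ (by field_simp; ring), hBeq]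
    congr 2
    have hcc : cc = (c : ℂ) := rfl
    have hc0 : (c : ℂ) ≠ 0 := by exact_mod_cast hcpos.ne'
    rw [hcc]
    push_cast
    field_simp
    ring

theorem seg_ker (B : Matrix (Fin 3 × Fin 3) (Fin 3 × Fin 3) ℂ) (hB : B ∈ segment ℝ XX YY) 
    (v : Fin 3 × Fin 3 → ℂ) (hv : v ∈ Kset) : B *ᵥ v = 0 := by
  obtain ⟨a, b, ha, hb, hab, rfl⟩ := hB
  rw [XX_eq, YY_eq, lift_comb _ _ hab]
  exact lift_ker _ _ hv

theorem psd_split (A B : Matrix (Fin 3 × Fin 3) (Fin 3 × Fin 3) ℂ) (hA : A.PosSemidef)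
    (hB : B.PosSemidef) (a b : ℝ) (ha : 0 < a) (hb : 0 < b) (v : Fin 3 × Fin 3 → ℂ)
    (h : (a • A + b • B) *ᵥ v = 0) : A *ᵥ v = 0 := by
  rw [← hA.dotProduct_mulVec_zero_iff]
  have h1 : star v ⬝ᵥ ((a • A + b • B) *ᵥ v) = 0 := by rw [h]; simp
  rw [add_mulVec, smul_mulVec, smul_mulVec, dotProduct_add, dotProduct_smul, dotProduct_smul] at h1
  have hA1 := hA.dotProduct_mulVec_nonneg v
  have hB1 := hB.dotProduct_mulVec_nonneg v
  have hA2 := smul_nonneg ha.le hA1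
  have hB2 := smul_nonneg hb.le hB1
  have h3 := (add_eq_zero_iff_of_nonneg hA2 hB2).1 h1
  exact (smul_eq_zero.1 h3.1).resolve_left ha.ne'

theorem seg_face : IsFace (Cset 3) (segment ℝ XX YY) := by
  refine ⟨(aux_conv 3).segment_subset XX_mem YY_mem, convex_segment _ _, ?_⟩
  intro x hx y hy t ht0 ht1 hF
  refine ⟨key x hx fun v hv => ?_, key y hy fun v hv => ?_⟩
  · exact psd_split x y hx.1 hy.1 t (1 - t) ht0 (by linarith) v (seg_ker _ hF v hv)
  · refine psd_split y x hy.1 hx.1 (1 - t) t (by linarith) ht0 v ?_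
    rw [add_comm]
    exact seg_ker _ hF v hv

theorem A3_seg : A3 ∈ segment ℝ XX YY :=
  ⟨1 / 2, 1 - 1 / 2, by norm_num, by norm_num, by norm_num, A3_mid⟩

theorem face_eq : faceGen (Cset 3) A3 = segment ℝ XX YY := by
  apply Set.Subset.antisymm
  · exact Set.sInter_subset_of_mem ⟨seg_face, A3_seg⟩
  · apply Set.subset_sInter
    rintro F ⟨⟨_, hconv, hF⟩, hA⟩
    have := hF XX XX_mem YY YY_mem (1 / 2) (by norm_num) (by norm_num) (by rw [A3_mid]; exact hA)
    exact hconv.segment_subset this.1 this.2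

theorem A3_rank : A3.rank = 2 := by
  apply le_antisymm
  · have h : A3 = (Matrix.of fun p k => ![emb uu p / 2, star (emb uu p) / 2] k) *
        (Matrix.of fun k p => ![star (emb uu p), emb uu p] k : Matrix (Fin 2) _ ℂ) := by
      rw [← A3_mid, YY_eq', XX]
      ext p q
      simp [vecMulVec_apply, Matrix.mul_apply, Fin.sum_univ_two]
      ring
    rw [h]
    refine (rank_mul_le_left _ _).trans ((rank_le_card_width _).trans ?_)
    simp
  · refine le_trans ?_ (A3.rank_submatrix_le (![((0 : Fin 3), (0 : Fin 3)), (1, 1)] : Fin 2 → _)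
      (![((0 : Fin 3), (0 : Fin 3)), (1, 1)] : Fin 2 → _))
    rw [rank_of_isUnit]
    · simp
    · rw [isUnit_iff_isUnit_det, isUnit_iff_ne_zero, det_fin_two, A3_eq]
      simp [lift9, QQ]
      intro h
      have : (1 : ℂ) - 9 / 64 * 6 = 0 := by
        linear_combination h + 9 / 64 * s6_sq
      norm_num at this

/-- `A₃ ∈ C_3`, `rank A₃ = 2`, the face of `C_3` generated by `A₃` has dimension 1, and
it has exactly two extreme points which are entrywise complex conjugates. -/
theorem A3_face :
    A3 ∈ Cset 3 ∧ A3.rank = 2 ∧ faceDim (faceGen (Cset 3) A3) = 1 ∧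
    ∃ X Y : Matrix (Fin 3 × Fin 3) (Fin 3 × Fin 3) ℂ,
      X ≠ Y ∧ Set.extremePoints ℝ (faceGen (Cset 3) A3) = {X, Y} ∧
      Y = X.map (starRingEnd ℂ) := by
  refine ⟨seg_face.1 A3_seg, A3_rank, ?_, XX, YY, XX_ne, ?_, rfl⟩
  · rw [faceDim, face_eq, vectorSpan_segment]
    exact finrank_span_singleton (sub_ne_zero.2 XX_ne.symm)
  · rw [face_eq, aux_ext _ _ XX_ne]
end
end
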